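/- arXiv:2306.10333 — 2 statements merged into one kernel-verified Lean document; each statement's English description precedes it below -/
import Mathlib

section
/- Let C be a normal, closed cone in a real Banach space X, let D ⊆ X be closed, and let f : D → D be order-preserving and continuous. Assume that C is regular, or that f is γ-condensing, or that D ⊆ int C and f is τ-condensing. If x ∈ D is such that the sequence f^k(x) is increasing (respectively decreasing) and bounded above (respectively below) by some y ∈ D, then f^k(x) converges in norm to a fixed point of f in D. In particular, if x ≤ y, the order interval [x,y] is contained in D, and f([x,y]) ⊆ [x,y], then f has a fixed point in [x,y]. -/
/-!
Write `u k = f^[k] x`. The orbit stays in an order interval `[a, b]` with `a, b ∈ D`, which is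
norm bounded because `C` is normal. If `C` is regular the orbit converges at once. Otherwise the
range `A` of `u` satisfies `A = f '' A ∪ {x}`, and adjoining one point does not increase a measure
of noncompactness; a condensing `f` therefore forces the measure of `A` to vanish
(`small_cover_of_condensing`). For every `ε > 0` some member of a finite cover by sets of
diameter at most `ε` contains `u k` for infinitely many `k`, and monotonicity with normality
squeezes the remaining terms between these, so `u` is Cauchy (`cauchySeq_of_small_covers`).

In the Thompson case, `a ∈ interior C` gives `b ≤ β a` for some `β`, so `[a, b]` is bounded for
`d_T`. There, `d_T (v, w) < log β` gives `w - v ≤ (β - 1) v` and `v - w ≤ (β - 1) w`, hence norm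
closeness by normality (`norm_sub_le_of_thompsonDist`). The limit is a fixed point because `D` is
closed and `f` is continuous on it.
-/

open Filter Topology Bornology

section ConeDefs

variable {X : Type*} [NormedAddCommGroup X] [NormedSpace ℝ X]

/-- `C` is a closed cone: a closed convex set with `l • C ⊆ C` for `l ≥ 0` and `C ∩ (-C) = {0}`. -/
def IsClosedCone (C : Set X) : Prop :=
  IsClosed C ∧ Convex ℝ C ∧ (∀ l : ℝ, 0 ≤ l → ∀ x ∈ C, l • x ∈ C) ∧ C ∩ (-C) = {0}

/-- `C` is a normal cone: `0 ≤ x ≤ y` implies `‖x‖ ≤ κ * ‖y‖`. -/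
def IsNormalCone (C : Set X) : Prop :=
  ∃ κ : ℝ, ∀ x y : X, x ∈ C → y - x ∈ C → ‖x‖ ≤ κ * ‖y‖

/-- `C` is a regular cone: every decreasing sequence in `C` converges in norm. -/
def IsRegularCone (C : Set X) : Prop :=
  ∀ x : ℕ → X, (∀ n, x n ∈ C) → (∀ n, x n - x (n + 1) ∈ C) →
    ∃ l : X, Tendsto x atTop (𝓝 l)

/-- Thompson's metric: `d_T(x,y) = log inf {β ≥ 1 : β⁻¹ • x ≤ y ∧ y ≤ β • x}`,
where `≤` is the order induced by the cone `C`. -/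
noncomputable def thompsonDist (C : Set X) (x y : X) : ℝ :=
  Real.log (sInf {β : ℝ | 1 ≤ β ∧ y - β⁻¹ • x ∈ C ∧ β • x - y ∈ C})

/-- `A` is bounded in Thompson's metric. -/
def TBounded (C A : Set X) : Prop :=
  ∃ d : ℝ, ∀ x ∈ A, ∀ y ∈ A, thompsonDist C x y ≤ d

/-- Kuratowski's measure of noncompactness for the norm:
the infimum of all `d > 0` such that `A` admits a finite cover by sets of diameter at most `d`. -/
noncomputable def kuratowski (A : Set X) : ℝ :=
  sInf {d : ℝ | 0 < d ∧ ∃ (n : ℕ) (S : Fin n → Set X), A ⊆ ⋃ i, S i ∧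
    ∀ i, IsBounded (S i) ∧ Metric.diam (S i) ≤ d}

/-- Kuratowski's measure of noncompactness for Thompson's metric: the infimum of all `d > 0`
such that `A` admits a finite cover by subsets of `interior C` of `d_T`-diameter at most `d`. -/
noncomputable def tauMNC (C A : Set X) : ℝ :=
  sInf {d : ℝ | 0 < d ∧ ∃ (n : ℕ) (S : Fin n → Set X), A ⊆ ⋃ i, S i ∧
    ∀ i, S i ⊆ interior C ∧ ∀ x ∈ S i, ∀ y ∈ S i, thompsonDist C x y ≤ d}

/-- `f` is continuous and `γ`-condensing on `D`. -/
def GammaCondensing {X : Type*} [NormedAddCommGroup X] [NormedSpace ℝ X]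
    (f : X → X) (D : Set X) : Prop :=
  ContinuousOn f D ∧ ∀ A ⊆ D, IsBounded A → 0 < kuratowski A →
    kuratowski (f '' A) < kuratowski A

/-- `f` is continuous and `τ`-condensing on `D`. -/
def TauCondensing (C : Set X) (f : X → X) (D : Set X) : Prop :=
  ContinuousOn f D ∧ ∀ A ⊆ D, TBounded C A → 0 < tauMNC C A →
    tauMNC C (f '' A) < tauMNC C A

/-- `f` is nonexpansive with respect to Thompson's metric on `D`. -/
def TNonexpansiveOn (C : Set X) (f : X → X) (D : Set X) : Prop :=
  ∀ x ∈ D, ∀ y ∈ D, thompsonDist C (f x) (f y) ≤ thompsonDist C x y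

/-- `f` is order-preserving on `D` for the order induced by `C`. -/
def OrderPreservingOn (C : Set X) (f : X → X) (D : Set X) : Prop :=
  ∀ x ∈ D, ∀ y ∈ D, y - x ∈ C → f y - f x ∈ C

/-- `f` is subhomogeneous on `D`: `f (t • x) ≤ t • f x` for `t ≥ 1`. -/
def SubhomogeneousOn (C : Set X) (f : X → X) (D : Set X) : Prop :=
  ∀ t : ℝ, 1 ≤ t → ∀ x ∈ D, t • f x - f (t • x) ∈ C

/-- `M(x/y) = inf {β > 0 : x ≤ β • y}`, valued in `ℝ≥0∞` (`⊤` if no such `β` exists). -/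
noncomputable def Mratio (C : Set X) (x y : X) : ENNReal :=
  sInf {b : ENNReal | ∃ β : ℝ, 0 < β ∧ b = ENNReal.ofReal β ∧ β • y - x ∈ C}

/-- `m(x/y) = sup {α > 0 : α • y ≤ x}`, valued in `ℝ≥0∞`. -/
noncomputable def mratio (C : Set X) (x y : X) : ENNReal :=
  sSup {b : ENNReal | ∃ α : ℝ, 0 < α ∧ b = ENNReal.ofReal α ∧ x - α • y ∈ C}

/-- The upper Collatz–Wielandt number `r(f) = inf_{x ∈ int C} M(f(x)/x)`. -/
noncomputable def upperCW (C : Set X) (f : X → X) : ENNReal :=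
  ⨅ x ∈ interior C, Mratio C (f x) x

/-- The lower Collatz–Wielandt number `λ(f) = sup_{x ∈ int C} m(f(x)/x)`. -/
noncomputable def lowerCW (C : Set X) (f : X → X) : ENNReal :=
  ⨆ x ∈ interior C, mratio C (f x) x

/-- The order-unit norm `‖x‖_u = inf {k > 0 : -k • u ≤ x ≤ k • u}`. -/
noncomputable def orderUnitNorm (C : Set X) (u x : X) : ℝ :=
  sInf {k : ℝ | 0 < k ∧ x + k • u ∈ C ∧ k • u - x ∈ C}

end ConeDefs

section Helpers

variable {X : Type*} [NormedAddCommGroup X] [NormedSpace ℝ X] {C : Set X}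

/-! ### The order induced by a closed cone -/

lemma IsClosedCone.smul_mem (hC : IsClosedCone C) {l : ℝ} (hl : 0 ≤ l) {x : X} (hx : x ∈ C) :
    l • x ∈ C := hC.2.2.1 l hl x hx

lemma IsClosedCone.zero_mem (hC : IsClosedCone C) : (0 : X) ∈ C := by
  have h : (0 : X) ∈ C ∩ (-C) := by rw [hC.2.2.2]; rfl
  exact h.1

lemma IsClosedCone.add_mem (hC : IsClosedCone C) {x y : X} (hx : x ∈ C) (hy : y ∈ C) :
    x + y ∈ C := by
  have h := hC.2.1 hx hy (by norm_num : (0 : ℝ) ≤ 1 / 2) (by norm_num : (0 : ℝ) ≤ 1 / 2)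
    (by norm_num)
  have h2 := hC.smul_mem (l := 2) (by norm_num) h
  rw [smul_add, smul_smul, smul_smul] at h2
  norm_num at h2
  exact h2

lemma IsClosedCone.le_trans (hC : IsClosedCone C) {x y z : X} (hxy : y - x ∈ C)
    (hyz : z - y ∈ C) : z - x ∈ C := by
  have h := hC.add_mem hyz hxy
  rwa [sub_add_sub_cancel] at h

lemma IsNormalCone.exists_nonneg {E : Type*} [NormedAddCommGroup E] {C : Set E}
    (h : IsNormalCone C) : ∃ κ : ℝ, 0 ≤ κ ∧ ∀ x y : E, x ∈ C → y - x ∈ C → ‖x‖ ≤ κ * ‖y‖ := by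
  obtain ⟨κ, hκ⟩ := h
  refine ⟨max κ 0, le_max_right _ _, fun x y hx hy => (hκ x y hx hy).trans ?_⟩
  gcongr
  exact le_max_left _ _

lemma IsClosedCone.le_of_increasing (hC : IsClosedCone C) {u : ℕ → X}
    (hu : ∀ k, u (k + 1) - u k ∈ C) {i j : ℕ} (hij : i ≤ j) : u j - u i ∈ C := by
  induction j, hij using Nat.le_induction with
  | base => simpa using hC.zero_mem
  | succ n _ ih => exact hC.le_trans ih (hu n)

lemma IsClosedCone.ge_of_decreasing (hC : IsClosedCone C) {u : ℕ → X}
    (hu : ∀ k, u k - u (k + 1) ∈ C) {i j : ℕ} (hij : i ≤ j) : u i - u j ∈ C := by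
  induction j, hij using Nat.le_induction with
  | base => simpa using hC.zero_mem
  | succ n _ ih => exact hC.le_trans (hu n) ih

/-! ### Measures of noncompactness along an orbit -/

/-- The terms of a sequence lying in one covering set are pairwise `ε`-close. By pigeonhole some
set contains infinitely many terms, and `hmono` (a consequence of monotonicity and normality)
transfers the estimate to all terms in between. -/
lemma cauchySeq_of_small_covers {E : Type*} [NormedAddCommGroup E] {u : ℕ → E} {κ : ℝ}
    (hκ : 0 ≤ κ)
    (hmono : ∀ i j k, i ≤ j → j ≤ k → ‖u j - u i‖ ≤ κ * ‖u k - u i‖)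
    (hcov : ∀ ε > 0, ∃ (n : ℕ) (S : Fin n → Set E), Set.range u ⊆ ⋃ i, S i ∧
      ∀ i j k, u j ∈ S i → u k ∈ S i → ‖u k - u j‖ ≤ ε) :
    CauchySeq u := by
  rw [Metric.cauchySeq_iff']
  intro ε hε
  obtain ⟨n, S, hS, hd⟩ := hcov (ε / (κ + 1)) (by positivity)
  have hmem : ∀ k, ∃ i, u k ∈ S i := fun k => Set.mem_iUnion.1 (hS ⟨k, rfl⟩)
  choose g hg using hmem
  obtain ⟨i, hi⟩ := Finite.exists_infinite_fiber g
  have hinf : (g ⁻¹' {i}).Infinite := Set.infinite_coe_iff.1 hi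
  obtain ⟨N, hN⟩ := hinf.nonempty
  refine ⟨N, fun k hk => ?_⟩
  obtain ⟨m, hm, hkm⟩ := hinf.exists_gt k
  have hN' : u N ∈ S i := by have := hg N; rwa [show g N = i from hN] at this
  have hm' : u m ∈ S i := by have := hg m; rwa [show g m = i from hm] at this
  rw [dist_eq_norm]
  calc ‖u k - u N‖ ≤ κ * ‖u m - u N‖ := hmono N k m hk hkm.le
    _ ≤ κ * (ε / (κ + 1)) := by gcongr; exact hd i N m hN' hm'
    _ < (κ + 1) * (ε / (κ + 1)) := by gcongr; linarith
    _ = ε := by field_simp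

/-- Here `P S d` says that `S` has diameter at most `d`, so that the infimum is a Kuratowski
measure of noncompactness, for the norm or for Thompson's metric. If `f` strictly decreases it on
the range of an orbit of `f` whenever it is positive, then it vanishes there. -/
lemma small_cover_of_condensing {E : Type*} (P : Set E → ℝ → Prop) {f : E → E} {u : ℕ → E}
    (hu : ∀ k, u (k + 1) = f (u k))
    (h0 : ∀ d, 0 < d → P {u 0} d) {d₀ : ℝ} (hd₀ : 0 < d₀) (hP : P (f '' Set.range u) d₀)
    (hcond : 0 < sInf {d : ℝ | 0 < d ∧ ∃ (n : ℕ) (S : Fin n → Set E),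
        Set.range u ⊆ ⋃ i, S i ∧ ∀ i, P (S i) d} →
      sInf {d : ℝ | 0 < d ∧ ∃ (n : ℕ) (S : Fin n → Set E),
        f '' Set.range u ⊆ ⋃ i, S i ∧ ∀ i, P (S i) d} <
      sInf {d : ℝ | 0 < d ∧ ∃ (n : ℕ) (S : Fin n → Set E),
        Set.range u ⊆ ⋃ i, S i ∧ ∀ i, P (S i) d})
    {ε : ℝ} (hε : 0 < ε) :
    ∃ d, 0 < d ∧ d < ε ∧ ∃ (n : ℕ) (S : Fin n → Set E),
      Set.range u ⊆ ⋃ i, S i ∧ ∀ i, P (S i) d := by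
  set K := {d : ℝ | 0 < d ∧ ∃ (n : ℕ) (S : Fin n → Set E),
        Set.range u ⊆ ⋃ i, S i ∧ ∀ i, P (S i) d} with hK
  set K' := {d : ℝ | 0 < d ∧ ∃ (n : ℕ) (S : Fin n → Set E),
        f '' Set.range u ⊆ ⋃ i, S i ∧ ∀ i, P (S i) d} with hK'
  have hne : K'.Nonempty := ⟨d₀, hd₀, 1, fun _ => f '' Set.range u,
    fun z hz => Set.mem_iUnion.2 ⟨0, hz⟩, fun _ => hP⟩
  have hsub : K' ⊆ K := by
    rintro d ⟨hd, n, S, hS, hSP⟩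
    refine ⟨hd, n + 1, Fin.cons {u 0} S, ?_, ?_⟩
    · rintro _ ⟨k, rfl⟩
      rw [Set.mem_iUnion]
      cases k with
      | zero => exact ⟨0, by simp⟩
      | succ k =>
        obtain ⟨i, hi⟩ := Set.mem_iUnion.1 (hS ⟨u k, ⟨k, rfl⟩, rfl⟩)
        exact ⟨i.succ, by simpa [hu k] using hi⟩
    · intro i
      refine Fin.cases ?_ (fun i => ?_) i
      · simpa using h0 d hd
      · simpa using hSP i
  have hbdd : BddBelow K := ⟨0, fun d hd => hd.1.le⟩
  have hle : sInf K ≤ sInf K' := csInf_le_csInf hbdd hne hsub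
  have hzero : sInf K ≤ 0 := by
    by_contra! hpos
    exact absurd (hcond hpos) (not_lt.2 hle)
  obtain ⟨d, ⟨hd, n, S, hS⟩, hdε⟩ := exists_lt_of_csInf_lt (hne.mono hsub) (hzero.trans_lt hε)
  exact ⟨d, hd, hdε, n, S, hS⟩

/-! ### Thompson's metric on order intervals -/

lemma thompsonDist_le_log {x y : X} {β : ℝ} (hβ : 1 ≤ β)
    (h1 : y - β⁻¹ • x ∈ C) (h2 : β • x - y ∈ C) : thompsonDist C x y ≤ Real.log β := by
  unfold thompsonDist
  have hmem : β ∈ {β : ℝ | 1 ≤ β ∧ y - β⁻¹ • x ∈ C ∧ β • x - y ∈ C} := ⟨hβ, h1, h2⟩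
  have h1le : 1 ≤ sInf {β : ℝ | 1 ≤ β ∧ y - β⁻¹ • x ∈ C ∧ β • x - y ∈ C} :=
    le_csInf ⟨β, hmem⟩ fun b hb => hb.1
  exact Real.log_le_log (by linarith) (csInf_le ⟨1, fun b hb => hb.1⟩ hmem)

/-- Interior points of `C` are order units. -/
lemma exists_smul_dominates (hC : IsClosedCone C) {a : X} (ha : a ∈ interior C) (b : X) :
    ∃ β : ℝ, 1 ≤ β ∧ β • a - b ∈ C := by
  have hlim : Tendsto (fun t : ℝ => a - t • b) (𝓝[>] 0) (𝓝 a) := by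
    have : Tendsto (fun t : ℝ => a - t • b) (𝓝 0) (𝓝 (a - (0 : ℝ) • b)) :=
      (by fun_prop : Continuous fun t : ℝ => a - t • b).tendsto 0
    rw [zero_smul, sub_zero] at this
    exact this.mono_left nhdsWithin_le_nhds
  obtain ⟨t, htC, ht⟩ :=
    ((hlim.eventually (mem_interior_iff_mem_nhds.1 ha)).and self_mem_nhdsWithin).exists
  have ht : 0 < t := ht
  refine ⟨t⁻¹ + 1, by have := inv_pos.2 ht; linarith, ?_⟩
  have h := hC.add_mem (hC.smul_mem (inv_pos.2 ht).le htC) (interior_subset ha)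
  convert h using 1
  rw [smul_sub, smul_smul, inv_mul_cancel₀ ht.ne', add_smul]
  module

/-- If `b ≤ β a`, then `β` is admissible in the definition of `d_T (x, y)` for all `x`, `y` in
`[a, b]`. -/
lemma thompson_mem_of_interval (hC : IsClosedCone C) {a b x y : X} {β : ℝ} (hβ : 1 ≤ β)
    (hab : β • a - b ∈ C) (hxa : x - a ∈ C) (hbx : b - x ∈ C) (hya : y - a ∈ C)
    (hby : b - y ∈ C) : y - β⁻¹ • x ∈ C ∧ β • x - y ∈ C := by
  have key : ∀ {v w : X}, v - a ∈ C → b - w ∈ C → β • v - w ∈ C := by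
    intro v w hv hw
    have hb : β • v - β • a ∈ C := by
      rw [← smul_sub]; exact hC.smul_mem (by linarith) hv
    exact hC.le_trans hw (hC.le_trans hab hb)
  refine ⟨?_, key hxa hby⟩
  have h := hC.smul_mem (inv_nonneg.2 (by linarith : (0 : ℝ) ≤ β)) (key hya hbx)
  rwa [smul_sub, smul_smul, inv_mul_cancel₀ (by linarith), one_smul] at h

/-- Points of an order interval `[a, b]` with `a ∈ interior C` that are comparable and close in
Thompson's metric are close in norm. Membership in the interior ensures that the infimum defining
the metric is over a nonempty set. -/
lemma norm_sub_le_of_thompsonDist (hC : IsClosedCone C) {κ : ℝ} (hκ : 0 ≤ κ)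
    (hn : ∀ x y : X, x ∈ C → y - x ∈ C → ‖x‖ ≤ κ * ‖y‖)
    {a b v w : X} (ha : a ∈ interior C) (hva : v - a ∈ C) (hbv : b - v ∈ C) (hwa : w - a ∈ C)
    (hbw : b - w ∈ C) {β : ℝ} (hd : thompsonDist C v w < Real.log β) (hβ : 1 < β)
    (hcomp : w - v ∈ C ∨ v - w ∈ C) :
    ‖w - v‖ ≤ κ * ((β - 1) * ‖b‖) := by
  obtain ⟨β₀, hβ₀, hab⟩ := exists_smul_dominates hC ha b
  have hmem := thompson_mem_of_interval hC hβ₀ hab hva hbv hwa hbw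
  have hne : {β : ℝ | 1 ≤ β ∧ w - β⁻¹ • v ∈ C ∧ β • v - w ∈ C}.Nonempty := ⟨β₀, hβ₀, hmem⟩
  have hs1 : 1 ≤ sInf {β : ℝ | 1 ≤ β ∧ w - β⁻¹ • v ∈ C ∧ β • v - w ∈ C} :=
    le_csInf hne fun b hb => hb.1
  have hs : sInf {β : ℝ | 1 ≤ β ∧ w - β⁻¹ • v ∈ C ∧ β • v - w ∈ C} < β :=
    (Real.log_lt_log_iff (by linarith) (by linarith)).1 hd
  obtain ⟨c, ⟨hc1, hcw, hcv⟩, hcβ⟩ := exists_lt_of_csInf_lt hne hs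
  have hc0 : 0 < c := by linarith
  have key : ∀ {p q : X}, q - p ∈ C → c • p - q ∈ C → b - p ∈ C →
      ‖q - p‖ ≤ κ * ((β - 1) * ‖b‖) := by
    intro p q hpq hcp hbp
    have h1 : (c - 1) • p - (q - p) ∈ C := by
      convert hcp using 1
      module
    have h2 : (c - 1) • b - (c - 1) • p ∈ C := by
      rw [← smul_sub]; exact hC.smul_mem (by linarith) hbp
    have h3 := hn _ _ hpq (hC.le_trans h1 h2)
    rw [norm_smul, Real.norm_of_nonneg (by linarith)] at h3
    refine h3.trans ?_
    gcongr
  rcases hcomp with h | h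
  · exact key h hcv hbv
  · rw [norm_sub_rev]
    refine key h ?_ hbw
    have h' := hC.smul_mem hc0.le hcw
    rwa [smul_sub, smul_smul, mul_inv_cancel₀ hc0.ne', one_smul] at h'

/-! ### Convergence of monotone orbits -/

lemma cauchySeq_of_condensing (hC : IsClosedCone C) (hnorm : IsNormalCone C) {D : Set X}
    {f : X → X}
    (hcond : GammaCondensing f D ∨ (D ⊆ interior C ∧ TauCondensing C f D))
    {u : ℕ → X} (hu : ∀ k, u (k + 1) = f (u k)) (huD : ∀ k, u k ∈ D) {a b : X} (haD : a ∈ D)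
    (hua : ∀ k, u k - a ∈ C) (hub : ∀ k, b - u k ∈ C)
    (hmono : (∀ k, u (k + 1) - u k ∈ C) ∨ (∀ k, u k - u (k + 1) ∈ C)) :
    CauchySeq u := by
  obtain ⟨κ, hκ, hn⟩ := hnorm.exists_nonneg
  have hsub : Set.range u ⊆ D := by rintro _ ⟨k, rfl⟩; exact huD k
  have himg : f '' Set.range u ⊆ Set.range u := by
    rintro _ ⟨_, ⟨k, rfl⟩, rfl⟩; exact ⟨k + 1, hu k⟩
  have hbdd : IsBounded (Set.range u) := by
    refine isBounded_iff_forall_norm_le.2 ⟨κ * ‖b - a‖ + ‖a‖, ?_⟩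
    rintro _ ⟨k, rfl⟩
    have h1 := hn (u k - a) (b - a) (hua k) (by simpa using hub k)
    have h2 := norm_add_le (u k - a) a
    rw [sub_add_cancel] at h2
    linarith
  have hcomp : ∀ j k, u k - u j ∈ C ∨ u j - u k ∈ C := by
    intro j k
    rcases hmono with h | h <;> rcases le_total j k with hjk | hjk
    · exact Or.inl (hC.le_of_increasing h hjk)
    · exact Or.inr (hC.le_of_increasing h hjk)
    · exact Or.inr (hC.ge_of_decreasing h hjk)
    · exact Or.inl (hC.ge_of_decreasing h hjk)
  refine cauchySeq_of_small_covers hκ ?_ ?_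
  · intro i j k hij hjk
    rcases hmono with h | h
    · refine hn _ _ (hC.le_of_increasing h hij) ?_
      rw [sub_sub_sub_cancel_right]
      exact hC.le_of_increasing h hjk
    · rw [norm_sub_rev (u j), norm_sub_rev (u k)]
      refine hn _ _ (hC.ge_of_decreasing h hij) ?_
      rw [sub_sub_sub_cancel_left]
      exact hC.ge_of_decreasing h hjk
  · intro ε hε
    rcases hcond with ⟨-, hγ⟩ | ⟨hDint, -, hτ⟩
    · obtain ⟨d, hd, hdε, n, S, hS, hSd⟩ := small_cover_of_condensing
        (fun S d => IsBounded S ∧ Metric.diam S ≤ d) hu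
        (fun d hd => ⟨isBounded_singleton, by simpa using hd.le⟩)
        (d₀ := Metric.diam (f '' Set.range u) + 1)
        (by have := Metric.diam_nonneg (s := f '' Set.range u); linarith)
        ⟨hbdd.subset himg, by linarith⟩ (hγ _ hsub hbdd) hε
      refine ⟨n, S, hS, fun i j k hj hk => ?_⟩
      rw [← dist_eq_norm]
      exact (Metric.dist_le_diam_of_mem (hSd i).1 hk hj).trans ((hSd i).2.trans hdε.le)
    · obtain ⟨β, hβ, hab⟩ := exists_smul_dominates hC (hDint haD) b
      have hdist : ∀ j k, thompsonDist C (u j) (u k) ≤ Real.log β := fun j k =>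
        have h := thompson_mem_of_interval hC hβ hab (hua j) (hub j) (hua k) (hub k)
        thompsonDist_le_log hβ h.1 h.2
      have hTb : TBounded C (Set.range u) := by
        refine ⟨Real.log β, ?_⟩
        rintro _ ⟨j, rfl⟩ _ ⟨k, rfl⟩
        exact hdist j k
      -- `δ` is chosen so that `κ * (δ * ‖b‖) ≤ ε`; it is used with `β = 1 + δ`.
      set δ : ℝ := ε / (κ * ‖b‖ + 1) with hδ
      have hδ0 : 0 < δ := by positivity
      obtain ⟨d, hd, hdε, n, S, hS, hSd⟩ := small_cover_of_condensing
        (fun S d => S ⊆ interior C ∧ ∀ x ∈ S, ∀ y ∈ S, thompsonDist C x y ≤ d) hu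
        (fun d hd => ⟨by simpa using hDint (huD 0), by
          rintro x rfl y rfl
          have h := thompsonDist_le_log (C := C) (x := u 0) (y := u 0) (β := 1) le_rfl
            (by simpa using hC.zero_mem) (by simpa using hC.zero_mem)
          rw [Real.log_one] at h
          exact h.trans hd.le⟩)
        (d₀ := Real.log β + 1)
        (by have := Real.log_nonneg hβ; linarith)
        ⟨(himg.trans hsub).trans hDint, by
          intro x hx y hy
          obtain ⟨j, rfl⟩ := himg hx
          obtain ⟨k, rfl⟩ := himg hy
          linarith [hdist j k]⟩
        (hτ _ hsub hTb) (Real.log_pos (by linarith : 1 < 1 + δ))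
      refine ⟨n, S, hS, fun i j k hj hk => ?_⟩
      have h := norm_sub_le_of_thompsonDist hC hκ hn (hDint haD) (hua j) (hub j) (hua k) (hub k)
        (((hSd i).2 _ hj _ hk).trans_lt hdε) (by linarith) (hcomp j k)
      refine h.trans ?_
      calc κ * ((1 + δ - 1) * ‖b‖) = δ * (κ * ‖b‖) := by ring
        _ ≤ δ * (κ * ‖b‖ + 1) := by gcongr; linarith
        _ = ε := by rw [hδ]; field_simp

lemma fixedPoint_of_monotone_orbit [CompleteSpace X] (hC : IsClosedCone C)
    (hnorm : IsNormalCone C) {D : Set X} (hD : IsClosed D) {f : X → X}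
    (hfD : Set.MapsTo f D D) (hcont : ContinuousOn f D)
    (hcond : IsRegularCone C ∨ GammaCondensing f D ∨ (D ⊆ interior C ∧ TauCondensing C f D))
    {x a b : X} (hx : x ∈ D) (haD : a ∈ D)
    (hua : ∀ k, f^[k] x - a ∈ C) (hub : ∀ k, b - f^[k] x ∈ C)
    (hmono : (∀ k, f^[k + 1] x - f^[k] x ∈ C) ∨ (∀ k, f^[k] x - f^[k + 1] x ∈ C)) :
    ∃ p ∈ D, f p = p ∧ Tendsto (fun k : ℕ => f^[k] x) atTop (𝓝 p) := by
  have huD : ∀ k, f^[k] x ∈ D := fun k => hfD.iterate k hx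
  have hlim : ∃ p, Tendsto (fun k : ℕ => f^[k] x) atTop (𝓝 p) := by
    rcases hcond with hreg | hcond
    · rcases hmono with h | h
      · obtain ⟨l, hl⟩ := hreg (fun k => b - f^[k] x) hub fun k => by
          simpa only [sub_sub_sub_cancel_left] using h k
        exact ⟨b - l, by simpa using hl.const_sub b⟩
      · obtain ⟨l, hl⟩ := hreg (fun k => f^[k] x - a) hua fun k => by
          simpa only [sub_sub_sub_cancel_right] using h k
        exact ⟨l + a, by simpa using hl.add_const a⟩
    · exact cauchySeq_tendsto_of_complete (cauchySeq_of_condensing hC hnorm hcond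
        (fun k => Function.iterate_succ_apply' f k x) huD haD hua hub hmono)
  obtain ⟨p, hp⟩ := hlim
  have hpD : p ∈ D := hD.mem_of_tendsto hp (Eventually.of_forall huD)
  refine ⟨p, hpD, ?_, hp⟩
  have h1 : Tendsto (fun k => f (f^[k] x)) atTop (𝓝 (f p)) :=
    (hcont p hpD).tendsto.comp
      (tendsto_nhdsWithin_iff.2 ⟨hp, Eventually.of_forall huD⟩)
  have h2 : Tendsto (fun k => f (f^[k] x)) atTop (𝓝 p) := by
    simpa only [Function.comp_def, Function.iterate_succ_apply'] using
      hp.comp (tendsto_add_atTop_nat 1)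
  exact tendsto_nhds_unique h1 h2

end Helpers

/-- Monotone convergence to fixed points. For an order-preserving continuous
`f : D → D` (with `C` regular, or `f` `γ`-condensing, or `D ⊆ int C` and `f` `τ`-condensing):
increasing orbits bounded above, and decreasing orbits bounded below, converge to fixed points;
and if `f` maps a nonempty order interval `[x,y] ⊆ D` into itself then `f` has a fixed point
in `[x,y]`. -/
theorem stmt8 {X : Type*} [NormedAddCommGroup X] [NormedSpace ℝ X] [CompleteSpace X]
    {C : Set X} (hC : IsClosedCone C) (hnorm : IsNormalCone C)
    {D : Set X} (hD : IsClosed D) {f : X → X}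
    (hfD : Set.MapsTo f D D)
    (hop : OrderPreservingOn C f D)
    (hcont : ContinuousOn f D)
    (hcond : IsRegularCone C ∨ GammaCondensing f D ∨
      (D ⊆ interior C ∧ TauCondensing C f D)) :
    (∀ x ∈ D, ∀ y ∈ D,
      (∀ k : ℕ, f^[k + 1] x - f^[k] x ∈ C) → (∀ k : ℕ, y - f^[k] x ∈ C) →
      ∃ p ∈ D, f p = p ∧ Tendsto (fun k : ℕ => f^[k] x) atTop (𝓝 p)) ∧
    (∀ x ∈ D, ∀ y ∈ D,
      (∀ k : ℕ, f^[k] x - f^[k + 1] x ∈ C) → (∀ k : ℕ, f^[k] x - y ∈ C) →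
      ∃ p ∈ D, f p = p ∧ Tendsto (fun k : ℕ => f^[k] x) atTop (𝓝 p)) ∧
    (∀ x y : X, y - x ∈ C →
      (∀ z : X, z - x ∈ C → y - z ∈ C → z ∈ D) →
      (∀ z : X, z - x ∈ C → y - z ∈ C → (f z - x ∈ C ∧ y - f z ∈ C)) →
      ∃ p : X, (p - x ∈ C ∧ y - p ∈ C) ∧ f p = p) := by
  have inc : ∀ x ∈ D, ∀ y ∈ D,
      (∀ k : ℕ, f^[k + 1] x - f^[k] x ∈ C) → (∀ k : ℕ, y - f^[k] x ∈ C) →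
      ∃ p ∈ D, f p = p ∧ Tendsto (fun k : ℕ => f^[k] x) atTop (𝓝 p) := by
    intro x hx y _ hinc hub
    exact fixedPoint_of_monotone_orbit hC hnorm hD hfD hcont hcond hx hx
      (fun k => hC.le_of_increasing (u := fun k => f^[k] x) hinc (Nat.zero_le k)) hub
      (Or.inl hinc)
  refine ⟨inc, ?_, ?_⟩
  · intro x hx y hy hdec hlb
    exact fixedPoint_of_monotone_orbit hC hnorm hD hfD hcont hcond hx hy hlb
      (fun k => hC.ge_of_decreasing (u := fun k => f^[k] x) hdec (Nat.zero_le k)) (Or.inr hdec)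
  · intro x y hxy hID hf
    have h0 : ∀ z : X, z - z ∈ C := fun z => by simpa using hC.zero_mem
    have hx : x ∈ D := hID x (h0 x) hxy
    have hy : y ∈ D := hID y hxy (h0 y)
    have hI : ∀ k : ℕ, f^[k] x - x ∈ C ∧ y - f^[k] x ∈ C := by
      intro k
      induction k with
      | zero => exact ⟨h0 x, hxy⟩
      | succ k ih =>
        rw [Function.iterate_succ_apply']
        exact hf _ ih.1 ih.2
    have hinc : ∀ k : ℕ, f^[k + 1] x - f^[k] x ∈ C := by
      intro k
      induction k with
      | zero => exact (hI 1).1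
      | succ k ih =>
        rw [Function.iterate_succ_apply' f (k + 1), Function.iterate_succ_apply' f k]
        rw [Function.iterate_succ_apply' f k] at ih
        exact hop _ (hfD.iterate k hx) _ (hfD (hfD.iterate k hx)) ih
    obtain ⟨p, _, hfp, hp⟩ := inc x hx y hy hinc fun k => (hI k).2
    exact ⟨p, ⟨hC.1.mem_of_tendsto (hp.sub_const x) (Eventually.of_forall fun k => (hI k).1),
      hC.1.mem_of_tendsto (hp.const_sub y) (Eventually.of_forall fun k => (hI k).2)⟩, hfp⟩
end

section
/- Let C be a normal, closed cone with nonempty interior in a real Banach space and let f : int C → int C be order-preserving and subhomogeneous. Assume that C is regular or that f is γ-condensing or τ-condensing. If u is a fixed point of f and Fix(f) is bounded in Thompson's metric, then for any R > r > 0 such that Fix(f) is contained in the open d_T-ball B_r(u), there exists k ∈ ℕ such that f^k maps the closed ball [e^{−R}u, e^{R}u] into B_r(u). In particular, if f has a unique fixed point u in int C, then f^k(x) converges to u for every x ∈ int C. -/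
/-!
The orbits `a k = f^[k] (e^R • u)` and `b k = f^[k] (e^{-R} • u)` of the endpoints of the ball are
monotone, the first decreasing and the second increasing: subhomogeneity and `f u = u` give
`f (e^R • u) ≤ e^R • u` and `e^{-R} • u ≤ f (e^{-R} • u)`. Both stay in `[e^{-R} • u, e^R • u]`.

Each of the three hypotheses forces such a monotone orbit to converge in norm
(`orbit_tendsto`). For a regular cone this is immediate. In the condensing cases, the orbit and its
image under `f` differ by at most one point, so they have the same measure of noncompactness, which
must therefore vanish (`exists_cover_of_condensing`); a monotone sequence with covers by finitely
many arbitrarily small sets is Cauchy when the cone is normal (`cauchySeq_of_covers`).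

The limit lies above `e^{-R} • u`, hence in the interior, and is a fixed point because `f` is
nonexpansive for Thompson's metric (`fixed_of_tendsto`). So both limits lie in `B_r(u)`, some `a k`
and `b k` do too, and every `f^[k] z` with `z` in the ball is squeezed between them. If `u` is the
only fixed point, `a` and `b` both converge to `u` and normality squeezes all orbits to `u`.
-/

open Filter Topology Bornology

section Aux

variable {X : Type*} [NormedAddCommGroup X] [NormedSpace ℝ X] {C : Set X}

lemma IsClosedCone.trans (hC : IsClosedCone C) {x y z : X} (h₁ : y - x ∈ C) (h₂ : z - y ∈ C) :
    z - x ∈ C := by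
  simpa using hC.add_mem h₂ h₁

lemma IsClosedCone.antisymm (hC : IsClosedCone C) {x y : X} (h₁ : y - x ∈ C) (h₂ : x - y ∈ C) :
    x = y := by
  have h : x - y ∈ C ∩ (-C) := ⟨h₂, by simpa using h₁⟩
  rw [hC.2.2.2] at h
  exact sub_eq_zero.1 h

open scoped Pointwise in
lemma IsClosedCone.add_mem_interior (hC : IsClosedCone C) {x y : X} (hx : x ∈ interior C)
    (hy : y ∈ C) : x + y ∈ interior C := by
  have h : C + C ⊆ C := by
    rintro _ ⟨a, ha, b, hb, rfl⟩
    exact hC.add_mem ha hb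
  exact interior_mono h (subset_interior_add_left (Set.add_mem_add hx hy))

open scoped Pointwise in
lemma IsClosedCone.smul_mem_interior (hC : IsClosedCone C) {l : ℝ} (hl : 0 < l) {x : X}
    (hx : x ∈ interior C) : l • x ∈ interior C := by
  have h : l • C ⊆ C := by
    rintro _ ⟨a, ha, rfl⟩
    exact hC.smul_mem hl.le ha
  apply interior_mono h
  rw [interior_smul₀ hl.ne']
  exact Set.smul_mem_smul_set hx

lemma IsClosedCone.mem_interior_of_le (hC : IsClosedCone C) {x y : X} (hx : x ∈ interior C)
    (h : y - x ∈ C) : y ∈ interior C := by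
  simpa using hC.add_mem_interior hx h

lemma IsClosedCone.le_of_antitone (hC : IsClosedCone C) {s : ℕ → X}
    (h : ∀ k, s k - s (k + 1) ∈ C) {m n : ℕ} (hmn : m ≤ n) : s m - s n ∈ C := by
  induction n, hmn using Nat.le_induction with
  | base => simpa using hC.zero_mem
  | succ n _ ih => exact hC.trans (h n) ih

/-- Every point of the interior is an order unit. -/
lemma IsClosedCone.exists_smul_sub_mem (hC : IsClosedCone C) {x : X} (hx : x ∈ interior C)
    (y : X) : ∃ β : ℝ, 1 ≤ β ∧ β • x - y ∈ C := by
  have ht : Tendsto (fun β : ℝ => x - β⁻¹ • y) atTop (𝓝 (x - (0 : ℝ) • y)) :=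
    tendsto_const_nhds.sub (tendsto_inv_atTop_zero.smul_const y)
  rw [zero_smul, sub_zero] at ht
  obtain ⟨β, h1, h2⟩ :=
    ((ht.eventually (isOpen_interior.mem_nhds hx)).and (eventually_ge_atTop 1)).exists
  refine ⟨β, h2, ?_⟩
  have hβ : β ≠ 0 := by positivity
  have := hC.smul_mem (by positivity : 0 ≤ β) (interior_subset h1)
  rwa [smul_sub, smul_inv_smul₀ hβ] at this

lemma IsClosedCone.smul_sub_mem_mono (hC : IsClosedCone C) {x y : X} (hx : x ∈ C) {β β' : ℝ}
    (hb : β ≤ β') (h : β • x - y ∈ C) : β' • x - y ∈ C := by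
  have := hC.add_mem h (hC.smul_mem (sub_nonneg.2 hb) hx)
  convert this using 1
  module

/-- `x ≤ β y` is the same as `β⁻¹ x ≤ y`. -/
lemma IsClosedCone.sub_inv_smul_mem_iff (hC : IsClosedCone C) {x y : X} {β : ℝ} (hβ : 0 < β) :
    y - β⁻¹ • x ∈ C ↔ β • y - x ∈ C := by
  constructor
  · intro h
    have := hC.smul_mem hβ.le h
    rwa [smul_sub, smul_inv_smul₀ hβ.ne'] at this
  · intro h
    have := hC.smul_mem (inv_nonneg.2 hβ.le) h
    rwa [smul_sub, inv_smul_smul₀ hβ.ne'] at this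

/-! ### Thompson's metric -/

lemma IsClosedCone.thompsonDist_le (hC : IsClosedCone C) {x y : X} {β : ℝ} (hβ : 1 ≤ β)
    (h₁ : β • y - x ∈ C) (h₂ : β • x - y ∈ C) : thompsonDist C x y ≤ Real.log β := by
  have hmem : β ∈ {β : ℝ | 1 ≤ β ∧ y - β⁻¹ • x ∈ C ∧ β • x - y ∈ C} :=
    ⟨hβ, (hC.sub_inv_smul_mem_iff (by linarith)).2 h₁, h₂⟩
  have hone : 1 ≤ sInf {β : ℝ | 1 ≤ β ∧ y - β⁻¹ • x ∈ C ∧ β • x - y ∈ C} :=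
    le_csInf ⟨β, hmem⟩ fun b hb => hb.1
  exact Real.log_le_log (by linarith) (csInf_le ⟨1, fun b hb => hb.1⟩ hmem)

/-- A strict bound on Thompson's metric is witnessed by a constant `β`. The points must be
interior: otherwise the set defining the metric could be empty, with infimum `0`. -/
lemma IsClosedCone.exists_of_thompsonDist_lt (hC : IsClosedCone C) {x y : X}
    (hx : x ∈ interior C) (hy : y ∈ interior C) {r : ℝ} (h : thompsonDist C x y < r) :
    ∃ β : ℝ, 1 ≤ β ∧ β < Real.exp r ∧ β • y - x ∈ C ∧ β • x - y ∈ C := by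
  obtain ⟨β₁, h1, h1'⟩ := hC.exists_smul_sub_mem hx y
  obtain ⟨β₂, h2, h2'⟩ := hC.exists_smul_sub_mem hy x
  have hmem : max β₁ β₂ ∈ {β : ℝ | 1 ≤ β ∧ y - β⁻¹ • x ∈ C ∧ β • x - y ∈ C} :=
    ⟨le_max_of_le_left h1,
      (hC.sub_inv_smul_mem_iff (lt_max_of_lt_left (by linarith))).2
        (hC.smul_sub_mem_mono (interior_subset hy) (le_max_right _ _) h2'),
      hC.smul_sub_mem_mono (interior_subset hx) (le_max_left _ _) h1'⟩
  have hone : 1 ≤ sInf {β : ℝ | 1 ≤ β ∧ y - β⁻¹ • x ∈ C ∧ β • x - y ∈ C} :=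
    le_csInf ⟨_, hmem⟩ fun b hb => hb.1
  have hlt := (Real.log_lt_iff_lt_exp (by linarith)).1 h
  obtain ⟨β, ⟨hb1, hb2, hb3⟩, hb4⟩ := exists_lt_of_csInf_lt ⟨_, hmem⟩ hlt
  exact ⟨β, hb1, hb4, (hC.sub_inv_smul_mem_iff (by linarith)).1 hb2, hb3⟩

/-! ### Monotone orbits -/

/-- Nonexpansiveness of `f` for Thompson's metric, in one-sided form. -/
lemma smul_map_sub_mem (hC : IsClosedCone C) {f : X → X}
    (hop : OrderPreservingOn C f (interior C)) (hsub : SubhomogeneousOn C f (interior C))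
    {x y : X} (hx : x ∈ interior C) (hy : y ∈ interior C) {β : ℝ} (hβ : 1 ≤ β)
    (h : β • x - y ∈ C) : β • f x - f y ∈ C :=
  hC.trans (hop y hy (β • x) (hC.smul_mem_interior (by linarith) hx) h) (hsub β hβ x hx)

/-- The limit in the interior of a norm convergent orbit is a fixed point. -/
lemma fixed_of_tendsto (hC : IsClosedCone C) {f : X → X}
    (hop : OrderPreservingOn C f (interior C)) (hsub : SubhomogeneousOn C f (interior C))
    {s : ℕ → X} (hs : ∀ k, s (k + 1) = f (s k)) (hsC : ∀ k, s k ∈ interior C) {a : X}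
    (ha : a ∈ interior C) (hlim : Tendsto s atTop (𝓝 a)) : f a = a := by
  have hlim' : Tendsto (fun k => f (s k)) atTop (𝓝 a) := by
    simpa only [hs] using (tendsto_add_atTop_iff_nat 1).2 hlim
  -- For `β > 1`, eventually `s k ≤ β a` and `a ≤ β s k`; apply `f` and pass to the limit.
  have key : ∀ β : ℝ, 1 < β → β • f a - a ∈ C ∧ β • a - f a ∈ C := by
    intro β hβ
    have hint : (β - 1) • a ∈ interior C := hC.smul_mem_interior (by linarith) ha
    have e1 : ∀ᶠ k in atTop, β • a - s k ∈ interior C := by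
      have : Tendsto (fun k => β • a - s k) atTop (𝓝 (β • a - a)) :=
        tendsto_const_nhds.sub hlim
      refine this.eventually (isOpen_interior.mem_nhds ?_)
      convert hint using 1
      module
    have e2 : ∀ᶠ k in atTop, β • s k - a ∈ interior C := by
      have : Tendsto (fun k => β • s k - a) atTop (𝓝 (β • a - a)) :=
        (hlim.const_smul β).sub tendsto_const_nhds
      refine this.eventually (isOpen_interior.mem_nhds ?_)
      convert hint using 1
      module
    constructor
    · refine hC.1.mem_of_tendsto (tendsto_const_nhds.sub hlim') (e1.mono fun k hk => ?_)
      exact smul_map_sub_mem hC hop hsub ha (hsC k) hβ.le (interior_subset hk)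
    · refine hC.1.mem_of_tendsto ((hlim'.const_smul β).sub tendsto_const_nhds)
        (e2.mono fun k hk => ?_)
      exact smul_map_sub_mem hC hop hsub (hsC k) ha hβ.le (interior_subset hk)
  have lim : ∀ x y : X, (∀ β : ℝ, 1 < β → β • x - y ∈ C) → x - y ∈ C := by
    intro x y h
    have ht : Tendsto (fun β : ℝ => β • x - y) (𝓝[>] 1) (𝓝 ((1 : ℝ) • x - y)) :=
      ((continuous_id.smul continuous_const).sub continuous_const).continuousWithinAt
    rw [one_smul] at ht
    exact hC.1.mem_of_tendsto ht (eventually_mem_nhdsWithin.mono fun β hβ => h β hβ)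
  exact hC.antisymm (lim _ _ fun β hβ => (key β hβ).2) (lim _ _ fun β hβ => (key β hβ).1)

/-- In a normal cone, a monotone sequence (decreasing for `σ = 1`, increasing for `σ = -1`) whose
terms are covered by finitely many sets of arbitrarily small diameter is Cauchy: one set of each
cover contains infinitely many terms, and these trap all later terms. -/
lemma cauchySeq_of_covers (hnorm : IsNormalCone C) {σ : ℝ}
    (hσ : σ = 1 ∨ σ = -1) {s : ℕ → X} (hmono : ∀ m n, m ≤ n → σ • (s m - s n) ∈ C)
    (hcov : ∀ ε : ℝ, 0 < ε → ∃ (n : ℕ) (S : Fin n → Set X), Set.range s ⊆ ⋃ i, S i ∧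
      ∀ i, ∀ k l, k ≤ l → s k ∈ S i → s l ∈ S i → ‖s k - s l‖ ≤ ε) : CauchySeq s := by
  obtain ⟨κ, hκ⟩ := hnorm
  have hns : ∀ x : X, ‖σ • x‖ = ‖x‖ := by
    intro x
    rcases hσ with rfl | rfl <;> simp
  refine Metric.cauchySeq_iff'.2 fun ε hε => ?_
  have hκ1 : 0 < |κ| + 1 := by positivity
  obtain ⟨n, S, hS, hd⟩ := hcov (ε / (2 * (|κ| + 1))) (by positivity)
  have hmem : ∀ k, ∃ i, s k ∈ S i := fun k => Set.mem_iUnion.1 (hS ⟨k, rfl⟩)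
  choose c hc using hmem
  obtain ⟨i, hi⟩ := Finite.exists_infinite_fiber c
  have hinf : (c ⁻¹' {i}).Infinite := Set.infinite_coe_iff.1 hi
  obtain ⟨N, hN⟩ := hinf.nonempty
  refine ⟨N, fun m hm => ?_⟩
  obtain ⟨l, hl, hml⟩ := hinf.exists_gt m
  have hNi : s N ∈ S i := by
    have := hc N
    rwa [show c N = i from hN] at this
  have hli : s l ∈ S i := by
    have := hc l
    rwa [show c l = i from hl] at this
  have h1 := hd i N l (hm.trans hml.le) hNi hli
  have h2 := hκ (σ • (s N - s m)) (σ • (s N - s l)) (hmono N m hm) (by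
    have := hmono m l hml.le
    convert this using 1
    module)
  rw [hns, hns] at h2
  rw [dist_comm, dist_eq_norm]
  calc ‖s N - s m‖ ≤ κ * ‖s N - s l‖ := h2
    _ ≤ (|κ| + 1) * (ε / (2 * (|κ| + 1))) := by
      apply mul_le_mul _ h1 (norm_nonneg _) hκ1.le
      linarith [le_abs_self κ]
    _ = ε / 2 := by field_simp
    _ < ε := by linarith

/-- The measure of noncompactness built from a predicate `P d S`, read as `S` having diameter at most `d`;
both `kuratowski` and `tauMNC` are instances. -/
noncomputable def coverMNC (P : ℝ → Set X → Prop) (A : Set X) : ℝ :=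
  sInf {d : ℝ | 0 < d ∧ ∃ (n : ℕ) (S : Fin n → Set X), A ⊆ ⋃ i, S i ∧ ∀ i, P d (S i)}

/-- The range of an orbit exceeds its image under `f` by a single point, so a condensing map forces
the range to have measure of noncompactness zero. -/
lemma exists_cover_of_condensing {P : ℝ → Set X → Prop} {f : X → X} {s : ℕ → X}
    (hs : ∀ k, s (k + 1) = f (s k)) (hpt : ∀ d, 0 < d → P d {s 0})
    (hbd : ∃ d, 0 < d ∧ P d (Set.range s))
    (hcond : 0 < coverMNC P (Set.range s) →
      coverMNC P (f '' Set.range s) < coverMNC P (Set.range s)) {ε : ℝ} (hε : 0 < ε) :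
    ∃ d, 0 < d ∧ d < ε ∧ ∃ (n : ℕ) (S : Fin n → Set X), Set.range s ⊆ ⋃ i, S i ∧
      ∀ i, P d (S i) := by
  obtain ⟨D, hD, hPD⟩ := hbd
  have himg : f '' Set.range s ⊆ Set.range s := by
    rintro _ ⟨_, ⟨k, rfl⟩, rfl⟩
    exact ⟨k + 1, hs k⟩
  have hle : coverMNC P (Set.range s) ≤ coverMNC P (f '' Set.range s) := by
    apply csInf_le_csInf ⟨0, fun d hd => hd.1.le⟩
    · exact ⟨D, hD, 1, fun _ => Set.range s, fun x hx => Set.mem_iUnion.2 ⟨0, himg hx⟩,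
        fun _ => hPD⟩
    · rintro d ⟨hd, n, S, hS, hPS⟩
      refine ⟨hd, n + 1, Fin.cons {s 0} S, ?_, ?_⟩
      · rintro _ ⟨k, rfl⟩
        cases k with
        | zero => exact Set.mem_iUnion.2 ⟨0, by simp⟩
        | succ k =>
          obtain ⟨i, hi⟩ := Set.mem_iUnion.1 (hS ⟨s k, ⟨k, rfl⟩, rfl⟩)
          exact Set.mem_iUnion.2 ⟨i.succ, by simpa [hs] using hi⟩
      · intro i
        refine Fin.cases ?_ (fun j => ?_) i
        · simpa using hpt d hd
        · simpa using hPS j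
  have hzero : coverMNC P (Set.range s) ≤ 0 := by
    by_contra! h
    exact absurd (hcond h) hle.not_gt
  obtain ⟨d, ⟨hd, hcov⟩, hdε⟩ := exists_lt_of_csInf_lt
    (s := {d : ℝ | 0 < d ∧ ∃ (n : ℕ) (S : Fin n → Set X), Set.range s ⊆ ⋃ i, S i ∧
      ∀ i, P d (S i)})
    ⟨D, hD, 1, fun _ => Set.range s, fun x hx => Set.mem_iUnion.2 ⟨0, hx⟩, fun _ => hPD⟩
    (lt_of_le_of_lt hzero hε)
  exact ⟨d, hd, hdε, hcov⟩

/-- A monotone orbit (decreasing for `σ = 1`, increasing for `σ = -1`) in a ball of Thompson's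
metric converges to a fixed point. -/
lemma orbit_tendsto [CompleteSpace X] (hC : IsClosedCone C) (hnorm : IsNormalCone C) {f : X → X}
    (hop : OrderPreservingOn C f (interior C)) (hsub : SubhomogeneousOn C f (interior C))
    (hcond : IsRegularCone C ∨ GammaCondensing f (interior C) ∨ TauCondensing C f (interior C))
    {u : X} (hu : u ∈ interior C) {R : ℝ} (hR : 0 < R) {σ : ℝ} (hσ : σ = 1 ∨ σ = -1) {s : ℕ → X}
    (hs : ∀ k, s (k + 1) = f (s k)) (hlo : ∀ k, s k - Real.exp (-R) • u ∈ C)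
    (hhi : ∀ k, Real.exp R • u - s k ∈ C) (hmono : ∀ k, σ • (s k - s (k + 1)) ∈ C) :
    ∃ a ∈ interior C, f a = a ∧ Tendsto s atTop (𝓝 a) := by
  have hsC : ∀ k, s k ∈ interior C := fun k =>
    hC.mem_interior_of_le (hC.smul_mem_interior (Real.exp_pos _) hu) (hlo k)
  have hrange : Set.range s ⊆ interior C := by
    rintro _ ⟨k, rfl⟩
    exact hsC k
  have hmono' : ∀ m n, m ≤ n → σ • (s m - s n) ∈ C := by
    intro m n hmn
    rw [smul_sub]
    exact hC.le_of_antitone (s := fun k => σ • s k) (fun k => by simpa [smul_sub] using hmono k) hmn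
  obtain ⟨κ, hκ⟩ := id hnorm
  suffices h : ∃ a, Tendsto s atTop (𝓝 a) by
    obtain ⟨a, ha⟩ := h
    have haC : a ∈ interior C :=
      hC.mem_interior_of_le (hC.smul_mem_interior (Real.exp_pos (-R)) hu)
        (hC.1.mem_of_tendsto (ha.sub tendsto_const_nhds) (Eventually.of_forall hlo))
    exact ⟨a, haC, fixed_of_tendsto hC hop hsub hs hsC haC ha, ha⟩
  rcases hcond with hreg | hgam | htau
  · rcases hσ with rfl | rfl
    · exact hreg s (fun k => interior_subset (hsC k)) (by simpa using hmono)
    · obtain ⟨l, hl⟩ := hreg (fun k => Real.exp R • u - s k) hhi (fun k => by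
        convert hmono k using 1
        module)
      refine ⟨Real.exp R • u - l, ?_⟩
      simpa using (tendsto_const_nhds (x := Real.exp R • u)).sub hl
  · refine cauchySeq_tendsto_of_complete
      (cauchySeq_of_covers hnorm hσ hmono' fun ε hε => ?_)
    have hB : IsBounded (Set.range s) := by
      refine isBounded_iff_forall_norm_le.2 ⟨κ * ‖Real.exp R • u‖, ?_⟩
      rintro _ ⟨k, rfl⟩
      exact hκ _ _ (interior_subset (hsC k)) (hhi k)
    obtain ⟨d, hd, hdε, n, S, hS, hP⟩ := exists_cover_of_condensing
      (P := fun d S => IsBounded S ∧ Metric.diam S ≤ d) hs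
      (fun d hd => ⟨isBounded_singleton, by simpa using hd.le⟩)
      ⟨Metric.diam (Set.range s) + 1, by positivity, hB, by linarith⟩
      (hgam.2 _ hrange hB) hε
    refine ⟨n, S, hS, fun i k l _ hk hl => ?_⟩
    rw [← dist_eq_norm]
    exact (Metric.dist_le_diam_of_mem (hP i).1 hk hl).trans ((hP i).2.trans hdε.le)
  · refine cauchySeq_tendsto_of_complete
      (cauchySeq_of_covers hnorm hσ hmono' fun ε hε => ?_)
    have hexp : Real.exp (2 * R) * Real.exp (-R) = Real.exp R := by
      rw [← Real.exp_add]
      congr 1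
      ring
    have hone : 1 ≤ Real.exp (2 * R) := Real.one_le_exp (by linarith)
    -- `x ≤ e^R u = e^{2R} (e^{-R} u) ≤ e^{2R} y` for `x`, `y` in the ball of radius `R`.
    have hle : ∀ k l, Real.exp (2 * R) • s k - s l ∈ C := by
      intro k l
      have := hC.add_mem (hC.smul_mem (Real.exp_pos (2 * R)).le (hlo k)) (hhi l)
      rw [smul_sub, smul_smul, hexp] at this
      convert this using 1
      module
    have hdist : ∀ x ∈ Set.range s, ∀ y ∈ Set.range s, thompsonDist C x y ≤ 2 * R := by
      rintro _ ⟨k, rfl⟩ _ ⟨l, rfl⟩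
      simpa using hC.thompsonDist_le hone (hle l k) (hle k l)
    -- Sets of `d_T`-diameter below `η` have norm diameter at most `κ (e^η - 1) e^R ‖u‖`.
    obtain ⟨η, hη, hηε⟩ : ∃ η : ℝ, 0 < η ∧ κ * ‖(Real.exp η - 1) • Real.exp R • u‖ ≤ ε := by
      have ht : Tendsto (fun η : ℝ => κ * ‖(Real.exp η - 1) • Real.exp R • u‖) (𝓝[>] 0)
          (𝓝 (κ * ‖(Real.exp 0 - 1) • Real.exp R • u‖)) :=
        (Continuous.continuousWithinAt (by fun_prop))
      simp only [Real.exp_zero, sub_self, zero_smul, norm_zero, mul_zero] at ht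
      obtain ⟨η, h1, h2⟩ := ((ht.eventually (gt_mem_nhds hε)).and
        eventually_mem_nhdsWithin).exists
      exact ⟨η, h2, h1.le⟩
    obtain ⟨d, hd, hdη, n, S, hS, hP⟩ := exists_cover_of_condensing
      (P := fun d S => S ⊆ interior C ∧ ∀ x ∈ S, ∀ y ∈ S, thompsonDist C x y ≤ d) hs
      (fun d hd => ⟨by simpa using hsC 0, by
        rintro x rfl y rfl
        have h0 : (1 : ℝ) • s 0 - s 0 ∈ C := by simpa using hC.zero_mem
        have := hC.thompsonDist_le le_rfl h0 h0
        rw [Real.log_one] at this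
        linarith⟩)
      ⟨2 * R, by linarith, hrange, hdist⟩
      (htau.2 _ hrange ⟨2 * R, hdist⟩) hη
    refine ⟨n, S, hS, fun i k l hkl hk hl => ?_⟩
    obtain ⟨β, hβ1, hβ2, h1, h2⟩ := hC.exists_of_thompsonDist_lt (hsC k) (hsC l)
      (lt_of_le_of_lt ((hP i).2 _ hk _ hl) hdη)
    have hsmall : ∀ v w : X, β • v - w ∈ C → v ∈ C → Real.exp R • u - v ∈ C →
        (Real.exp η - 1) • Real.exp R • u - (w - v) ∈ C := by
      intro v w h hv hvR
      have h3 := hC.smul_sub_mem_mono hv hβ2.le h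
      have h4 := hC.smul_mem (by linarith : 0 ≤ Real.exp η - 1) hvR
      convert hC.add_mem h3 h4 using 1
      module
    have hns : ‖σ • (s k - s l)‖ = ‖s k - s l‖ := by
      rcases hσ with rfl | rfl <;> simp [norm_sub_rev]
    rw [← hns]
    refine (hκ _ _ (hmono' k l hkl) ?_).trans hηε
    rcases hσ with rfl | rfl
    · rw [one_smul]
      exact hsmall _ _ h1 (interior_subset (hsC l)) (hhi l)
    · rw [neg_one_smul, neg_sub]
      exact hsmall _ _ h2 (interior_subset (hsC k)) (hhi k)

/-- Iterates of `f` preserve the order on the interior. -/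
lemma iterate_sub_mem {f : X → X} (hf : Set.MapsTo f (interior C) (interior C))
    (hop : OrderPreservingOn C f (interior C)) {x y : X} (hx : x ∈ interior C)
    (hy : y ∈ interior C) (h : y - x ∈ C) (k : ℕ) : f^[k] y - f^[k] x ∈ C := by
  induction k with
  | zero => exact h
  | succ k ih =>
    rw [Function.iterate_succ_apply', Function.iterate_succ_apply']
    exact hop _ (hf.iterate k hx) _ (hf.iterate k hy) ih

/-- The orbits of both endpoints of a Thompson ball about a fixed point converge to fixed
points. -/
lemma endpoints_tendsto [CompleteSpace X] (hC : IsClosedCone C) (hnorm : IsNormalCone C)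
    {f : X → X} (hf : Set.MapsTo f (interior C) (interior C))
    (hop : OrderPreservingOn C f (interior C)) (hsub : SubhomogeneousOn C f (interior C))
    (hcond : IsRegularCone C ∨ GammaCondensing f (interior C) ∨ TauCondensing C f (interior C))
    {u : X} (hu : u ∈ interior C) (hufix : f u = u) {R : ℝ} (hR : 0 < R) :
    (∃ a ∈ interior C, f a = a ∧
      Tendsto (fun k : ℕ => f^[k] (Real.exp R • u)) atTop (𝓝 a)) ∧
    (∃ b ∈ interior C, f b = b ∧
      Tendsto (fun k : ℕ => f^[k] (Real.exp (-R) • u)) atTop (𝓝 b)) := by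
  have hone : 1 ≤ Real.exp R := Real.one_le_exp hR.le
  have hlt : Real.exp (-R) ≤ 1 := Real.exp_le_one_iff.2 (by linarith)
  have hinv : Real.exp R * Real.exp (-R) = 1 := by rw [← Real.exp_add]; simp
  have hinv' : Real.exp (-R) * Real.exp R = 1 := by rw [mul_comm, hinv]
  have hp : Real.exp R • u ∈ interior C := hC.smul_mem_interior (Real.exp_pos _) hu
  have hq : Real.exp (-R) • u ∈ interior C := hC.smul_mem_interior (Real.exp_pos _) hu
  have hfp : Real.exp R • u - f (Real.exp R • u) ∈ C := by
    have := hsub _ hone u hu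
    rwa [hufix] at this
  have hfq : f (Real.exp (-R) • u) - Real.exp (-R) • u ∈ C := by
    have h := hsub _ hone _ hq
    rw [smul_smul, hinv, one_smul, hufix] at h
    have h' := hC.smul_mem (Real.exp_pos (-R)).le h
    rwa [smul_sub, smul_smul, hinv', one_smul] at h'
  have hpq : Real.exp R • u - Real.exp (-R) • u ∈ C := by
    have := hC.smul_mem (by linarith : 0 ≤ Real.exp R - Real.exp (-R)) (interior_subset hu)
    rwa [sub_smul] at this
  have hmp : ∀ k, f^[k] (Real.exp R • u) - f^[k + 1] (Real.exp R • u) ∈ C := fun k => by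
    rw [Function.iterate_succ_apply]
    exact iterate_sub_mem hf hop (hf hp) hp hfp k
  have hmq : ∀ k, f^[k + 1] (Real.exp (-R) • u) - f^[k] (Real.exp (-R) • u) ∈ C := fun k => by
    rw [Function.iterate_succ_apply]
    exact iterate_sub_mem hf hop hq (hf hq) hfq k
  have hpR : ∀ k, Real.exp R • u - f^[k] (Real.exp R • u) ∈ C := fun k =>
    hC.le_of_antitone (s := fun k => f^[k] (Real.exp R • u)) hmp (Nat.zero_le k)
  have hqR : ∀ k, f^[k] (Real.exp (-R) • u) - Real.exp (-R) • u ∈ C := fun k => by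
    have := hC.le_of_antitone (s := fun k => -f^[k] (Real.exp (-R) • u))
      (fun k => by simpa [sub_eq_add_neg, add_comm] using hmq k) (Nat.zero_le k)
    simpa [sub_eq_add_neg, add_comm] using this
  have hcmp : ∀ k, f^[k] (Real.exp R • u) - f^[k] (Real.exp (-R) • u) ∈ C :=
    iterate_sub_mem hf hop hq hp hpq
  constructor
  · exact orbit_tendsto hC hnorm hop hsub hcond hu hR (σ := 1) (Or.inl rfl)
      (fun k => Function.iterate_succ_apply' f k _) (fun k => hC.trans (hqR k) (hcmp k)) hpR
      (fun k => by simpa only [one_smul] using hmp k)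
  · exact orbit_tendsto hC hnorm hop hsub hcond hu hR (σ := -1) (Or.inr rfl)
      (fun k => Function.iterate_succ_apply' f k _) hqR (fun k => hC.trans (hcmp k) (hpR k))
      (fun k => by simpa only [neg_one_smul, neg_sub] using hmq k)

end Aux

/-- If `u` is a fixed point of an order-preserving subhomogeneous map `f` and
`Fix(f)` is `d_T`-bounded, then for `R > r > 0` with `Fix(f) ⊆ B_r(u)` some iterate `f^k`
maps the order interval `[e^{-R} • u, e^R • u]` into `B_r(u)`; in particular if `u` is the
unique fixed point then all orbits converge to `u`. -/
theorem stmt9 {X : Type*} [NormedAddCommGroup X] [NormedSpace ℝ X] [CompleteSpace X]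
    {C : Set X} (hC : IsClosedCone C) (hnorm : IsNormalCone C)
    (hne : (interior C).Nonempty) {f : X → X}
    (hf : Set.MapsTo f (interior C) (interior C))
    (hop : OrderPreservingOn C f (interior C))
    (hsub : SubhomogeneousOn C f (interior C))
    (hcond : IsRegularCone C ∨ GammaCondensing f (interior C) ∨
      TauCondensing C f (interior C))
    {u : X} (hu : u ∈ interior C) (hufix : f u = u)
    (hbdd : TBounded C {x ∈ interior C | f x = x}) :
    (∀ r R : ℝ, 0 < r → r < R →
      (∀ z ∈ interior C, f z = z → thompsonDist C u z < r) →
      ∃ k : ℕ, ∀ z : X, z - Real.exp (-R) • u ∈ C → Real.exp R • u - z ∈ C →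
        f^[k] z ∈ interior C ∧ thompsonDist C u (f^[k] z) < r) ∧
    ((∀ z ∈ interior C, f z = z → z = u) →
      ∀ x ∈ interior C, Tendsto (fun k : ℕ => f^[k] x) atTop (𝓝 u)) := by
  constructor
  · intro r R hr hrR hfix
    have hR : 0 < R := hr.trans hrR
    obtain ⟨⟨a, ha, hfa, hta⟩, ⟨b, hb, hfb, htb⟩⟩ :=
      endpoints_tendsto hC hnorm hf hop hsub hcond hu hufix hR
    have hp : Real.exp R • u ∈ interior C := hC.smul_mem_interior (Real.exp_pos _) hu
    have hq : Real.exp (-R) • u ∈ interior C := hC.smul_mem_interior (Real.exp_pos _) hu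
    obtain ⟨α, hα1, hαr, -, hαa⟩ := hC.exists_of_thompsonDist_lt hu ha (hfix a ha hfa)
    obtain ⟨β, hβ1, hβr, hβb, -⟩ := hC.exists_of_thompsonDist_lt hu hb (hfix b hb hfb)
    -- A slightly larger constant `δ` makes both inequalities interior, hence open conditions.
    obtain ⟨δ, hδ, hδr⟩ := exists_between (max_lt hαr hβr)
    have hαδ : α < δ := (le_max_left _ _).trans_lt hδ
    have hβδ : β < δ := (le_max_right _ _).trans_lt hδ
    have ia : δ • u - a ∈ interior C := by
      have := hC.add_mem_interior (hC.smul_mem_interior (sub_pos.2 hαδ) hu) hαa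
      convert this using 1
      module
    have ib : δ • b - u ∈ interior C := by
      have := hC.add_mem_interior (hC.smul_mem_interior (sub_pos.2 hβδ) hb) hβb
      convert this using 1
      module
    have ea := ((tendsto_const_nhds (x := δ • u)).sub hta).eventually
      (isOpen_interior.mem_nhds ia)
    have eb := ((htb.const_smul δ).sub (tendsto_const_nhds (x := u))).eventually
      (isOpen_interior.mem_nhds ib)
    obtain ⟨k, hka, hkb⟩ := (ea.and eb).exists
    refine ⟨k, fun z hz1 hz2 => ?_⟩
    have hz : z ∈ interior C := hC.mem_interior_of_le hq hz1
    refine ⟨hf.iterate k hz, ?_⟩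
    have h1 : δ • u - f^[k] z ∈ C :=
      hC.trans (iterate_sub_mem hf hop hz hp hz2 k) (interior_subset hka)
    have h2 : δ • f^[k] z - u ∈ C := by
      have h3 := hC.smul_mem (by linarith : 0 ≤ δ) (iterate_sub_mem hf hop hq hz hz1 k)
      rw [smul_sub] at h3
      exact hC.trans (interior_subset hkb) h3
    exact (hC.thompsonDist_le (by linarith) h2 h1).trans_lt
      ((Real.log_lt_iff_lt_exp (by linarith)).2 hδr)
  · intro huniq x hx
    obtain ⟨β₁, h1, h1'⟩ := hC.exists_smul_sub_mem hu x
    obtain ⟨β₂, h2, h2'⟩ := hC.exists_smul_sub_mem hx u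
    -- `β₁ + β₂ ≥ 2` dominates both constants and has a positive logarithm.
    obtain ⟨R, hR, hb1, hb2⟩ : ∃ R : ℝ, 0 < R ∧ β₁ ≤ Real.exp R ∧ β₂ ≤ Real.exp R := by
      refine ⟨Real.log (β₁ + β₂), Real.log_pos (by linarith), ?_, ?_⟩ <;>
      · rw [Real.exp_log (by linarith)]
        linarith
    have hxu : Real.exp R • u - x ∈ C := hC.smul_sub_mem_mono (interior_subset hu) hb1 h1'
    have hux : x - Real.exp (-R) • u ∈ C := by
      rw [Real.exp_neg, hC.sub_inv_smul_mem_iff (Real.exp_pos R)]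
      exact hC.smul_sub_mem_mono (interior_subset hx) hb2 h2'
    obtain ⟨⟨a, ha, hfa, hta⟩, ⟨b, hb, hfb, htb⟩⟩ :=
      endpoints_tendsto hC hnorm hf hop hsub hcond hu hufix hR
    rw [huniq a ha hfa] at hta
    rw [huniq b hb hfb] at htb
    have hp : Real.exp R • u ∈ interior C := hC.smul_mem_interior (Real.exp_pos _) hu
    have hq : Real.exp (-R) • u ∈ interior C := hC.smul_mem_interior (Real.exp_pos _) hu
    obtain ⟨κ, hκ⟩ := hnorm
    have hdiff : Tendsto (fun k : ℕ => f^[k] x - f^[k] (Real.exp (-R) • u)) atTop (𝓝 0) := by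
      have ht : Tendsto (fun k : ℕ => κ * ‖f^[k] (Real.exp R • u) - f^[k] (Real.exp (-R) • u)‖)
          atTop (𝓝 0) := by
        simpa using ((hta.sub htb).norm).const_mul κ
      refine squeeze_zero_norm (fun k => ?_) ht
      refine hκ _ _ (iterate_sub_mem hf hop hq hx hux k) ?_
      rw [sub_sub_sub_cancel_right]
      exact iterate_sub_mem hf hop hx hp hxu k
    simpa using hdiff.add htb
end
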